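/- Proposition 4 (asymptotic SOP, Eq. (21), stated as a rigorous limit): let f(·; ḡ, κ, μ, m) denote the κ-μ shadowed PDF, let f_B(·; g) = f(·; N_B·g, κ_B, N_B·μ_B, N_B·m_B) and f_E = f(·; N_E·ȳ_E, κ_E, N_E·μ_E, N_E·m_E), and set G(x; g) = (∫₀^x f_B(t; g) dt)^{N_A}. Then for every τ ≥ 1, lim_{g→∞} g^{N_A·N_B·μ_B}·∫₀^∞ G(τγ; g)·f_E(γ) dγ = [ τ^{N_B·μ_B}·m_B^{N_B·m_B}·(1+κ_B)^{N_B·μ_B}·μ_B^{N_B·μ_B−1} / ( N_B·(m_B+κ_B·μ_B)^{N_B·m_B}·(N_B·μ_B−1)! ) ]^{N_A}·( ȳ_E/(μ_E(1+κ_E)) )^{N_A·N_B·μ_B}·( m_E^{N_E·m_E}·(N_A·N_B·μ_B+N_E·μ_E−1)! / ( (N_E·μ_E−1)!·(μ_E·κ_E+m_E)^{N_E·m_E} ) )·₂F₁( N_E·m_E, N_A·N_B·μ_B+N_E·μ_E; N_E·μ_E; κ_E·μ_E/(m_E+κ_E·μ_E) ). -/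

import Mathlib

open MeasureTheory

/-- The confluent hypergeometric function `₁F₁(a; b; z)`. -/
noncomputable def oneF1 (a b z : ℝ) : ℝ :=
  ∑' n : ℕ, (ascPochhammer ℝ n).eval a * z ^ n /
    ((ascPochhammer ℝ n).eval b * (Nat.factorial n : ℝ))

/-- The Gauss hypergeometric function `₂F₁(a₁, a₂; b; z)`. -/
noncomputable def twoF1 (a₁ a₂ b z : ℝ) : ℝ :=
  ∑' n : ℕ, (ascPochhammer ℝ n).eval a₁ * (ascPochhammer ℝ n).eval a₂ * z ^ n /
    ((ascPochhammer ℝ n).eval b * (Nat.factorial n : ℝ))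

/-- The κ-μ shadowed PDF with average SNR `g`, LOS parameter `κ > 0` and positive integer
fading parameters `μ, m` (here `Γ(μ) = (μ−1)!`). -/
noncomputable def kmuPDF (g κ : ℝ) (μ m : ℕ) (x : ℝ) : ℝ :=
  ((μ : ℝ) ^ μ * (m : ℝ) ^ m * (1 + κ) ^ μ) /
      ((Nat.factorial (μ - 1) : ℝ) * g ^ μ * ((μ : ℝ) * κ + m) ^ m) *
    x ^ (μ - 1) * Real.exp (-((μ : ℝ) * (1 + κ) * x) / g) *
    oneF1 (m : ℝ) (μ : ℝ) ((μ : ℝ) ^ 2 * κ * (1 + κ) * x / (((μ : ℝ) * κ + m) * g))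

lemma pc_pos (n k : ℕ) (hk : 1 ≤ k) : 0 < (ascPochhammer ℝ n).eval (k : ℝ) :=
  ascPochhammer_pos n _ (by exact_mod_cast hk)

lemma pc_eq (n k : ℕ) : (ascPochhammer ℝ n).eval (k : ℝ) = (k.ascFactorial n : ℝ) := by
  rw [← ascPochhammer_eval_cast, ascPochhammer_nat_eq_ascFactorial]

lemma pc_ge (n k : ℕ) (hk : 1 ≤ k) : (n.factorial : ℝ) ≤ (ascPochhammer ℝ n).eval (k : ℝ) := by
  rw [pc_eq]
  exact_mod_cast Nat.le_of_dvd (by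
    obtain ⟨j, rfl⟩ : ∃ j, k = j + 1 := ⟨k - 1, by omega⟩
    exact Nat.ascFactorial_pos _ _) (Nat.factorial_dvd_ascFactorial k n)

lemma pc_summable (k : ℕ) (hk : 1 ≤ k) {x : ℝ} (h0 : 0 ≤ x) (h1 : x < 1) :
    Summable (fun n : ℕ => (ascPochhammer ℝ n).eval (k : ℝ) / (n.factorial : ℝ) * x ^ n) := by
  obtain ⟨j, rfl⟩ : ∃ j, k = j + 1 := ⟨k - 1, by omega⟩
  have := summable_choose_mul_geometric_of_norm_lt_one (R := ℝ) j (r := x)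
    (by rwa [Real.norm_of_nonneg h0])
  refine this.congr fun n => ?_
  have hn : (n.factorial : ℝ) ≠ 0 := by positivity
  rw [pc_eq, Nat.ascFactorial_eq_factorial_mul_choose, add_comm j n, Nat.choose_symm_add]
  push_cast
  field_simp

lemma ratio_bound (k m : ℕ) (hk : 1 ≤ k) (hm : 1 ≤ m) {x : ℝ} (h0 : 0 ≤ x) (h1 : x < 1) :
    ∃ C : ℝ, 0 < C ∧ ∀ n : ℕ, (ascPochhammer ℝ n).eval (k : ℝ) /
      (ascPochhammer ℝ n).eval (m : ℝ) * x ^ n ≤ C := by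
  have hs := pc_summable k hk h0 h1
  refine ⟨(∑' n : ℕ, (ascPochhammer ℝ n).eval (k : ℝ) / (n.factorial : ℝ) * x ^ n) + 1, ?_, ?_⟩
  · have : 0 ≤ ∑' n : ℕ, (ascPochhammer ℝ n).eval (k : ℝ) / (n.factorial : ℝ) * x ^ n :=
      tsum_nonneg fun n => by have := pc_pos n k hk; positivity
    linarith
  · intro n
    have h2 := hs.le_tsum n (fun j _ => by have := pc_pos j k hk; positivity)
    have h3 : (ascPochhammer ℝ n).eval (k : ℝ) / (ascPochhammer ℝ n).eval (m : ℝ) * x ^ n ≤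
      (ascPochhammer ℝ n).eval (k : ℝ) / (n.factorial : ℝ) * x ^ n := by
      have := pc_pos n k hk
      have := pc_ge n m hm
      gcongr
    linarith

lemma term_bound (k m : ℕ) (hk : 1 ≤ k) (hm : 1 ≤ m) {x : ℝ} (h0 : 0 < x) (h1 : x < 1) :
    ∃ C : ℝ, 0 < C ∧ ∀ (n : ℕ) (z R : ℝ), |z| ≤ x * R →
      ‖(ascPochhammer ℝ n).eval (k : ℝ) * z ^ n /
        ((ascPochhammer ℝ n).eval (m : ℝ) * (n.factorial : ℝ))‖ ≤ C * (R ^ n / n.factorial) := by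
  obtain ⟨C, hC, h⟩ := ratio_bound k m hk hm h0.le h1
  refine ⟨C, hC, fun n z R hz => ?_⟩
  have a := pc_pos n k hk
  have b := pc_pos n m hm
  have hR : 0 ≤ R := by
    by_contra hR
    nlinarith [abs_nonneg z]
  rw [norm_div, norm_mul, norm_mul, norm_pow, Real.norm_of_nonneg a.le, Real.norm_of_nonneg b.le,
    Real.norm_eq_abs, Real.norm_natCast]
  calc _ ≤ (ascPochhammer ℝ n).eval (k : ℝ) * (x * R) ^ n /
        ((ascPochhammer ℝ n).eval (m : ℝ) * (n.factorial : ℝ)) := by gcongr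
    _ = ((ascPochhammer ℝ n).eval (k : ℝ) / (ascPochhammer ℝ n).eval (m : ℝ) * x ^ n) *
        (R ^ n / n.factorial) := by rw [mul_pow]; field_simp
    _ ≤ _ := by gcongr; exact h n

lemma oneF1_summable (k m : ℕ) (hk : 1 ≤ k) (hm : 1 ≤ m) (z : ℝ) :
    Summable (fun n : ℕ => (ascPochhammer ℝ n).eval (k : ℝ) * z ^ n /
        ((ascPochhammer ℝ n).eval (m : ℝ) * (n.factorial : ℝ))) := by
  obtain ⟨C, hC, h⟩ := term_bound k m hk hm (x := 1/2) (by norm_num) (by norm_num)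
  exact Summable.of_norm_bounded ((Real.summable_pow_div_factorial (2 * |z|)).mul_left C)
    (fun n => h n z _ (by linarith))

lemma oneF1_continuous (k m : ℕ) (hk : 1 ≤ k) (hm : 1 ≤ m) :
    Continuous (fun z => oneF1 (k : ℝ) (m : ℝ) z) := by
  obtain ⟨C, hC, h⟩ := term_bound k m hk hm (x := 1/2) (by norm_num) (by norm_num)
  rw [continuous_iff_continuousAt]
  intro z₀
  have : ContinuousOn (fun z => oneF1 (k : ℝ) (m : ℝ) z) (Metric.ball 0 (|z₀| + 1)) := by
    unfold oneF1
    refine continuousOn_tsum (u := fun n => C * ((2 * (|z₀| + 1)) ^ n / n.factorial)) ?_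
      ((Real.summable_pow_div_factorial (2 * (|z₀| + 1))).mul_left C) ?_
    · intro n
      exact ((continuous_const.mul (continuous_pow n)).div_const _).continuousOn
    · intro n z hz
      refine h n z _ ?_
      rw [mem_ball_zero_iff, Real.norm_eq_abs] at hz
      linarith
  exact this.continuousAt (Metric.isOpen_ball.mem_nhds (by simp))

lemma oneF1_zero (a b : ℝ) : oneF1 a b 0 = 1 := by
  unfold oneF1
  rw [tsum_eq_single 0]
  · simp
  · intro n hn; simp [hn]

lemma oneF1_pos (k m : ℕ) (hk : 1 ≤ k) (hm : 1 ≤ m) {z : ℝ} (hz : 0 ≤ z) :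
    0 ≤ oneF1 (k : ℝ) (m : ℝ) z :=
  tsum_nonneg fun n => by
    have := pc_pos n k hk
    have := pc_pos n m hm
    positivity

/-- boundedness of `exp(-s u) * oneF1 (w u)`. -/
lemma h_bound (k m : ℕ) (hk : 1 ≤ k) (hm : 1 ≤ m) {s w : ℝ} (hw : 0 < w) (hs : w < s) :
    ∃ C : ℝ, 0 < C ∧ ∀ u, 0 ≤ u → |Real.exp (-(s * u)) * oneF1 (k : ℝ) (m : ℝ) (w * u)| ≤ C := by
  have hs0 : 0 < s := hw.trans hs
  obtain ⟨C, hC, h⟩ := term_bound k m hk hm (x := w / s) (by positivity)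
    (by rwa [div_lt_one hs0])
  refine ⟨C, hC, fun u hu => ?_⟩
  have h1 : ‖oneF1 (k : ℝ) (m : ℝ) (w * u)‖ ≤ C * Real.exp (s * u) := by
    unfold oneF1
    refine tsum_of_norm_bounded (g := fun n : ℕ => C * ((s * u) ^ n / n.factorial)) ?_ ?_
    · have := (NormedSpace.expSeries_div_hasSum_exp (s * u)).mul_left C
      rwa [← Real.exp_eq_exp_ℝ] at this
    · intro n
      refine h n _ _ (le_of_eq ?_)
      rw [abs_of_nonneg (by positivity)]
      field_simp
  rw [abs_mul, Real.abs_exp]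
  calc _ ≤ Real.exp (-(s * u)) * (C * Real.exp (s * u)) := by gcongr; exact h1
    _ = C := by rw [Real.exp_neg]; field_simp

lemma twoF1_summable (k l m : ℕ) (hk : 1 ≤ k) (hl : 1 ≤ l) (hm : 1 ≤ m) {x : ℝ} (h0 : 0 ≤ x)
    (h1 : x < 1) :
    Summable (fun n : ℕ => (ascPochhammer ℝ n).eval (k : ℝ) * (ascPochhammer ℝ n).eval (l : ℝ) *
      x ^ n / ((ascPochhammer ℝ n).eval (m : ℝ) * (n.factorial : ℝ))) := by
  have hq : √x < 1 := by rw [Real.sqrt_lt' one_pos]; simpa using h1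
  have hq0 := Real.sqrt_nonneg x
  obtain ⟨C, hC, h⟩ := ratio_bound k m hk hm hq0 hq
  refine Summable.of_nonneg_of_le (fun n => ?_) (fun n => ?_)
    ((pc_summable l hl hq0 hq).mul_left C)
  · have := pc_pos n k hk
    have := pc_pos n l hl
    have := pc_pos n m hm
    positivity
  · have a := pc_pos n k hk
    have b := pc_pos n l hl
    have c := pc_pos n m hm
    have hx : x ^ n = √x ^ n * √x ^ n := by rw [← mul_pow, Real.mul_self_sqrt h0]
    calc _ = ((ascPochhammer ℝ n).eval (k : ℝ) / (ascPochhammer ℝ n).eval (m : ℝ) * √x ^ n) *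
        ((ascPochhammer ℝ n).eval (l : ℝ) / (n.factorial : ℝ) * √x ^ n) := by
          rw [hx]; field_simp
      _ ≤ _ := by gcongr; exact h n

lemma gamma_int (n : ℕ) {s : ℝ} (hs : 0 < s) :
    ∫ x in Set.Ioi (0 : ℝ), x ^ n * Real.exp (-(s * x)) = n.factorial / s ^ (n + 1) := by
  have := Real.integral_rpow_mul_exp_neg_mul_Ioi (a := (n : ℝ) + 1) (by positivity) hs
  rw [Real.Gamma_nat_eq_factorial] at this
  simp only [add_sub_cancel_right, Real.rpow_natCast] at this
  rw [this]
  have h2 : ((n : ℝ) + 1) = ((n + 1 : ℕ) : ℝ) := by push_cast; ring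
  rw [h2, Real.rpow_natCast, one_div, inv_pow]
  field_simp

lemma main_int (A P Q : ℕ) (hP : 1 ≤ P) (hQ : 1 ≤ Q) {s z : ℝ} (hz : 0 < z) (hs : z < s) :
    ∫ x in Set.Ioi (0 : ℝ), x ^ (A + (P - 1)) * Real.exp (-(s * x)) *
      oneF1 (Q : ℝ) (P : ℝ) (z * x) =
      (A + P - 1).factorial / s ^ (A + P) *
        twoF1 (Q : ℝ) ((A + P : ℕ) : ℝ) (P : ℝ) (z / s) := by
  have hs0 : 0 < s := hz.trans hs
  obtain ⟨p, rfl⟩ : ∃ p, P = p + 1 := ⟨P - 1, by omega⟩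
  set a : ℕ → ℝ := fun n => (ascPochhammer ℝ n).eval (Q : ℝ) * z ^ n /
        ((ascPochhammer ℝ n).eval ((p + 1 : ℕ) : ℝ) * (n.factorial : ℝ)) with ha
  have ha0 : ∀ n, 0 < a n := fun n => by
    have := pc_pos n Q hQ
    have := pc_pos n (p + 1) hP
    simp only [ha]; positivity
  set F : ℕ → ℝ → ℝ := fun n x => a n * (x ^ (A + p + n) * Real.exp (-(s * x))) with hF
  have hFi : ∀ n, ∫ x in Set.Ioi (0 : ℝ), F n x =
      (A + p).factorial / s ^ (A + (p + 1)) * ((ascPochhammer ℝ n).eval (Q : ℝ) *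
        (ascPochhammer ℝ n).eval ((A + (p + 1) : ℕ) : ℝ) * (z / s) ^ n /
        ((ascPochhammer ℝ n).eval ((p + 1 : ℕ) : ℝ) * (n.factorial : ℝ))) := by
    intro n
    simp only [hF]
    rw [integral_const_mul, gamma_int _ hs0, pc_eq n (A + (p + 1)), ← add_assoc A p 1,
      ← Nat.factorial_mul_ascFactorial]
    have := pc_pos n (p + 1) hP
    simp only [ha]
    push_cast at this ⊢
    rw [div_pow]
    field_simp
    ring
  have hint : ∀ n, Integrable (F n) (volume.restrict (Set.Ioi 0)) := by
    intro n
    apply Integrable.of_integral_ne_zero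
    simp only [hF]
    rw [integral_const_mul, gamma_int _ hs0]
    have := ha0 n
    positivity
  have hnorm : ∀ n, ∫ x in Set.Ioi (0 : ℝ), ‖F n x‖ = ∫ x in Set.Ioi (0 : ℝ), F n x := by
    intro n
    refine setIntegral_congr_fun measurableSet_Ioi fun x hx => ?_
    have hx : 0 < x := hx
    have := ha0 n
    exact Real.norm_of_nonneg (by simp only [hF]; positivity)
  have hsum := (twoF1_summable Q (A + (p + 1)) (p + 1) hQ (by omega) hP (x := z / s)
    (by positivity) (by rwa [div_lt_one hs0]))
  have key := hasSum_integral_of_summable_integral_norm hint (by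
    simp only [hnorm, hFi]
    exact hsum.mul_left _)
  simp only [hFi] at key
  have key2 := key.unique (hsum.hasSum.mul_left _)
  rw [show A + (p + 1) - 1 = A + p by omega, show p + 1 - 1 = p by omega]
  unfold twoF1
  rw [← key2]
  refine integral_congr_ae (Filter.Eventually.of_forall fun x => ?_)
  simp only [hF, oneF1]
  rw [← tsum_mul_left]
  refine tsum_congr fun n => ?_
  simp only [ha]
  rw [mul_pow, pow_add]
  ring

lemma twoF1_pos (k l m : ℕ) (hk : 1 ≤ k) (hl : 1 ≤ l) (hm : 1 ≤ m) {x : ℝ} (h0 : 0 ≤ x)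
    (h1 : x < 1) : 0 < twoF1 (k : ℝ) (l : ℝ) (m : ℝ) x := by
  unfold twoF1
  refine (twoF1_summable k l m hk hl hm h0 h1).tsum_pos (fun n => ?_) 0 (by simp)
  have := pc_pos n k hk
  have := pc_pos n l hl
  have := pc_pos n m hm
  positivity

lemma prim_bound (M : ℕ) (hM : 1 ≤ M) (h : ℝ → ℝ) {C : ℝ}
    (hC : ∀ u, 0 ≤ u → |h u| ≤ C) {g x : ℝ} (hg : 0 < g) (hx : 0 ≤ x) :
    |∫ t in (0 : ℝ)..x, t ^ (M - 1) * h (t / g)| ≤ C * (x ^ M / M) := by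
  obtain ⟨p, rfl⟩ : ∃ p, M = p + 1 := ⟨M - 1, by omega⟩
  have h1 := intervalIntegral.norm_integral_le_of_norm_le (μ := volume) (a := 0) (b := x)
    (f := fun t => t ^ (p + 1 - 1) * h (t / g)) (g := fun t => C * t ^ p) hx
    (Filter.Eventually.of_forall fun t ht => by
      have ht0 : 0 ≤ t := ht.1.le
      rw [norm_mul, Real.norm_of_nonneg (by positivity), mul_comm]
      have := hC (t / g) (by positivity)
      rw [Real.norm_eq_abs]
      simp only [add_tsub_cancel_right]
      gcongr)
    ((by fun_prop : Continuous fun t : ℝ => C * t ^ p).intervalIntegrable _ _)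
  refine h1.trans (le_of_eq ?_)
  rw [intervalIntegral.integral_const_mul, integral_pow]
  simp

lemma prim_tendsto (M : ℕ) (hM : 1 ≤ M) (h : ℝ → ℝ) (hc : Continuous h) {C : ℝ}
    (hC : ∀ u, 0 ≤ u → |h u| ≤ C) (h0 : h 0 = 1) {x : ℝ} (hx : 0 ≤ x) :
    Filter.Tendsto (fun g : ℝ => ∫ t in (0 : ℝ)..x, t ^ (M - 1) * h (t / g)) Filter.atTop
      (nhds (x ^ M / M)) := by
  obtain ⟨p, rfl⟩ : ∃ p, M = p + 1 := ⟨M - 1, by omega⟩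
  have e : x ^ (p + 1) / ((p + 1 : ℕ) : ℝ) = ∫ t in (0 : ℝ)..x, t ^ p := by
    rw [integral_pow]; simp
  rw [e]
  simp only [add_tsub_cancel_right]
  refine intervalIntegral.tendsto_integral_filter_of_dominated_convergence (fun t => C * t ^ p)
    ?_ ?_ ?_ ?_
  · refine Filter.Eventually.of_forall fun g => ?_
    exact (by fun_prop : Continuous fun t : ℝ => t ^ p * h (t / g)).aestronglyMeasurable
  · filter_upwards [Filter.eventually_gt_atTop 0] with g hg
    refine Filter.Eventually.of_forall fun t ht => ?_
    rw [Set.uIoc_of_le hx] at ht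
    have ht0 : 0 ≤ t := ht.1.le
    rw [norm_mul, Real.norm_of_nonneg (by positivity), mul_comm]
    have := hC (t / g) (by positivity)
    rw [Real.norm_eq_abs]
    gcongr
  · exact (by fun_prop : Continuous fun t : ℝ => C * t ^ p).intervalIntegrable _ _
  · refine Filter.Eventually.of_forall fun t _ => ?_
    have h1 : Filter.Tendsto (fun g : ℝ => t / g) Filter.atTop (nhds 0) :=
      Filter.Tendsto.div_atTop tendsto_const_nhds Filter.tendsto_id
    have h2 := (hc.tendsto 0).comp h1
    rw [h0] at h2
    simpa using h2.const_mul (t ^ p)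

lemma outer_tendsto (M NA : ℕ) (hM : 1 ≤ M) (h : ℝ → ℝ) (hc : Continuous h) {C : ℝ}
    (hC : ∀ u, 0 ≤ u → |h u| ≤ C) (h0 : h 0 = 1) {τ : ℝ} (hτ : 0 < τ) (f : ℝ → ℝ)
    (hf : Continuous f) (hf0 : ∀ x, 0 ≤ x → 0 ≤ f x)
    (hfi : IntegrableOn (fun x => x ^ (NA * M) * f x) (Set.Ioi 0)) :
    Filter.Tendsto (fun g : ℝ => ∫ x in Set.Ioi (0 : ℝ),
        (∫ t in (0 : ℝ)..(τ * x), t ^ (M - 1) * h (t / g)) ^ NA * f x) Filter.atTop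
      (nhds ((τ ^ M / M) ^ NA * ∫ x in Set.Ioi (0 : ℝ), x ^ (NA * M) * f x)) := by
  rw [← integral_const_mul]
  have e : ∀ x : ℝ, (τ ^ M / M) ^ NA * (x ^ (NA * M) * f x) = ((τ * x) ^ M / M) ^ NA * f x := by
    intro x
    rw [mul_pow, mul_comm NA M, pow_mul, mul_div_right_comm, mul_pow]; ring
  refine tendsto_integral_filter_of_dominated_convergence
    (fun x => C ^ NA * ((τ ^ M / M) ^ NA * (x ^ (NA * M) * f x))) ?_ ?_ ?_ ?_
  · refine Filter.Eventually.of_forall fun g => ?_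
    have h1 : Continuous fun b : ℝ => ∫ t in (0 : ℝ)..b, t ^ (M - 1) * h (t / g) :=
      intervalIntegral.continuous_primitive (fun a b =>
        (by fun_prop : Continuous fun t : ℝ => t ^ (M - 1) * h (t / g)).intervalIntegrable _ _) 0
    have h2 : Continuous fun x : ℝ => ∫ t in (0 : ℝ)..(τ * x), t ^ (M - 1) * h (t / g) :=
      h1.comp (by fun_prop : Continuous fun x : ℝ => τ * x)
    exact ((h2.pow NA).mul hf).aestronglyMeasurable
  · filter_upwards [Filter.eventually_gt_atTop 0] with g hg
    refine (ae_restrict_iff' measurableSet_Ioi).mpr (Filter.Eventually.of_forall fun x hx => ?_)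
    have hx : 0 < x := hx
    have h1 := prim_bound M hM h hC hg (x := τ * x) (by positivity)
    have h2 := hf0 x hx.le
    rw [e, norm_mul, norm_pow, Real.norm_eq_abs, Real.norm_of_nonneg h2, ← mul_assoc, ← mul_pow]
    gcongr
  · exact (hfi.const_mul _).const_mul _
  · refine (ae_restrict_iff' measurableSet_Ioi).mpr (Filter.Eventually.of_forall fun x hx => ?_)
    have hx : 0 < x := hx
    rw [e]
    exact ((prim_tendsto M hM h hc hC h0 (x := τ * x) (by positivity)).pow NA).mul_const _

lemma kmu_eq (G κ : ℝ) (M K : ℕ) (x : ℝ) :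
    kmuPDF G κ M K x = ((M : ℝ) ^ M * (K : ℝ) ^ K * (1 + κ) ^ M /
      ((M - 1).factorial * (M * κ + K) ^ K)) / G ^ M * (x ^ (M - 1) *
      (Real.exp (-((M * (1 + κ)) * (x / G))) *
        oneF1 (K : ℝ) (M : ℝ) (((M : ℝ) ^ 2 * κ * (1 + κ) / (M * κ + K)) * (x / G)))) := by
  unfold kmuPDF
  rw [show -((M : ℝ) * (1 + κ) * x) / G = -((M * (1 + κ)) * (x / G)) by ring,
    show (M : ℝ) ^ 2 * κ * (1 + κ) * x / ((M * κ + K) * G) =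
      ((M : ℝ) ^ 2 * κ * (1 + κ) / (M * κ + K)) * (x / G) by
        rw [div_mul_div_comm]]
  rw [div_div]
  ring

lemma w_lt (κ : ℝ) (M K : ℕ) (hκ : 0 < κ) (hM : 1 ≤ M) (hK : 1 ≤ K) :
    (M : ℝ) ^ 2 * κ * (1 + κ) / (M * κ + K) < M * (1 + κ) := by
  have : (0 : ℝ) < M := by exact_mod_cast hM
  have hK : (0 : ℝ) < K := by exact_mod_cast hK
  rw [div_lt_iff₀ (by positivity)]
  have : 0 < (M : ℝ) * (1 + κ) * K := by positivity
  nlinarith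

/-- The limit in terms of aggregated parameters. -/
lemma agg (κB yE κE τ b e : ℝ) (M K P Q NA : ℕ) (hκB : 0 < κB) (hκE : 0 < κE)
    (hM : 1 ≤ M) (hK : 1 ≤ K) (hP : 1 ≤ P) (hQ : 1 ≤ Q) (hτ : 0 < τ) (hb : 0 < b) (he : 0 < e)
    (hyE : 0 < yE) :
    Filter.Tendsto
      (fun g : ℝ => g ^ (NA * M) *
        ∫ γ in Set.Ioi (0 : ℝ),
          (∫ t in (0 : ℝ)..(τ * γ), kmuPDF (b * g) κB M K t) ^ NA *
            kmuPDF (e * yE) κE P Q γ)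
      Filter.atTop
      (nhds ((((M : ℝ) ^ M * (K : ℝ) ^ K * (1 + κB) ^ M /
      ((M - 1).factorial * (M * κB + K) ^ K)) / b ^ M) ^ NA * ((τ ^ M / M) ^ NA *
        (((P : ℝ) ^ P * (Q : ℝ) ^ Q * (1 + κE) ^ P /
      ((P - 1).factorial * (P * κE + Q) ^ Q)) / (e * yE) ^ P *
        ((NA * M + P - 1).factorial / (P * (1 + κE) / (e * yE)) ^ (NA * M + P) *
        twoF1 (Q : ℝ) ((NA * M + P : ℕ) : ℝ) (P : ℝ) (P * κE / (P * κE + Q))))))) := by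
  have hM0 : (0 : ℝ) < M := by exact_mod_cast hM
  have hK0 : (0 : ℝ) < K := by exact_mod_cast hK
  have hP0 : (0 : ℝ) < P := by exact_mod_cast hP
  have hQ0 : (0 : ℝ) < Q := by exact_mod_cast hQ
  set cB : ℝ := ((M : ℝ) ^ M * (K : ℝ) ^ K * (1 + κB) ^ M /
      ((M - 1).factorial * (M * κB + K) ^ K)) with hcB
  set cE : ℝ := ((P : ℝ) ^ P * (Q : ℝ) ^ Q * (1 + κE) ^ P /
      ((P - 1).factorial * (P * κE + Q) ^ Q)) / (e * yE) ^ P with hcE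
  set s : ℝ := P * (1 + κE) / (e * yE) with hs
  set z : ℝ := ((P : ℝ) ^ 2 * κE * (1 + κE) / (P * κE + Q)) / (e * yE) with hz
  have hcE0 : 0 < cE := by positivity
  have hs0 : 0 < s := by positivity
  have hz0 : 0 < z := by positivity
  have hzs : z < s := by
    have := w_lt κE P Q hκE hP hQ
    simp only [hz, hs]
    gcongr
  have hzds : z / s = P * κE / (P * κE + Q) := by
    simp only [hz, hs]
    field_simp
  set f : ℝ → ℝ := fun x => kmuPDF (e * yE) κE P Q x with hf
  have hfe : ∀ x, f x = cE * (x ^ (P - 1) * (Real.exp (-(s * x)) *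
      oneF1 (Q : ℝ) (P : ℝ) (z * x))) := by
    intro x
    simp only [hf]
    rw [kmu_eq, ← hcE]
    congr 4
    · simp only [hs]; congr 1; ring
    · simp only [hz]; ring
  have hint : ∫ x in Set.Ioi (0 : ℝ), x ^ (NA * M) * f x = cE *
      ((NA * M + P - 1).factorial / s ^ (NA * M + P) *
        twoF1 (Q : ℝ) ((NA * M + P : ℕ) : ℝ) (P : ℝ) (P * κE / (P * κE + Q))) := by
    rw [← hzds, ← main_int (NA * M) P Q hP hQ hz0 hzs, ← integral_const_mul]
    congr 1
    ext x
    rw [hfe, pow_add]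
    ring
  have hfc : Continuous f := by
    rw [show f = _ from funext hfe]
    have h1 : Continuous fun x => oneF1 (Q : ℝ) (P : ℝ) (z * x) :=
      (oneF1_continuous Q P hQ hP).comp (by fun_prop : Continuous fun x : ℝ => z * x)
    fun_prop
  have hf0 : ∀ x, 0 ≤ x → 0 ≤ f x := by
    intro x hx
    rw [hfe]
    have := oneF1_pos Q P hQ hP (z := z * x) (by positivity)
    positivity
  have hfi : IntegrableOn (fun x => x ^ (NA * M) * f x) (Set.Ioi 0) := by
    apply Integrable.of_integral_ne_zero
    rw [hint]
    have := twoF1_pos Q (NA * M + P) P hQ (by omega) hP (x := P * κE / (P * κE + Q))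
      (by positivity) (by rw [div_lt_one (by positivity)]; linarith)
    positivity
  set w : ℝ := ((M : ℝ) ^ 2 * κB * (1 + κB) / (M * κB + K)) / b with hw
  set r : ℝ := M * (1 + κB) / b with hr
  have hw0 : 0 < w := by positivity
  have hwr : w < r := by
    have := w_lt κB M K hκB hM hK
    simp only [hw, hr]
    gcongr
  obtain ⟨C, -, hC⟩ := h_bound K M hK hM hw0 hwr
  set h : ℝ → ℝ := fun u => Real.exp (-(r * u)) * oneF1 (K : ℝ) (M : ℝ) (w * u) with hh
  have hc : Continuous h := by
    have h1 : Continuous fun x => oneF1 (K : ℝ) (M : ℝ) (w * x) :=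
      (oneF1_continuous K M hK hM).comp (by fun_prop : Continuous fun x : ℝ => w * x)
    fun_prop
  have hh0 : h 0 = 1 := by simp [hh, oneF1_zero]
  have key := (outer_tendsto M NA hM h hc hC hh0 hτ f hfc hf0 hfi).const_mul ((cB / b ^ M) ^ NA)
  rw [hint] at key
  refine key.congr' ?_
  filter_upwards [Filter.eventually_gt_atTop 0] with g hg
  rw [← integral_const_mul, ← integral_const_mul]
  congr 1
  ext x
  have e1 : ∫ t in (0 : ℝ)..(τ * x), kmuPDF (b * g) κB M K t =
      cB / (b * g) ^ M * ∫ t in (0 : ℝ)..(τ * x), t ^ (M - 1) * h (t / g) := by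
    rw [← intervalIntegral.integral_const_mul]
    congr 1
    ext t
    rw [kmu_eq, ← hcB]
    congr 3
    · simp only [hr]; congr 2; field_simp
    · simp only [hw]; congr 1; field_simp
  rw [e1]
  change _ = g ^ (NA * M) * (_ * f x)
  rw [mul_pow (cB / (b * g) ^ M), mul_comm NA M, pow_mul, ← mul_assoc, ← mul_assoc, ← mul_assoc,
    ← mul_pow (g ^ M)]
  congr 3
  rw [mul_pow]
  field_simp

/-- Proposition 4 (asymptotic SOP, Eq. (21)), as a rigorous limit: with
`f_B(·; g)` the Bob-side κ-μ shadowed PDF with parameters `(N_B g, κ_B, N_B μ_B, N_B m_B)`,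
`f_E` the Eve-side PDF with parameters `(N_E ȳ_E, κ_E, N_E μ_E, N_E m_E)` and
`G(x; g) = (∫₀^x f_B(t; g) dt)^{N_A}`, the normalized secrecy outage probability
`g^{N_A N_B μ_B} ∫₀^∞ G(τγ; g) f_E(γ) dγ` converges, as `ḡ_B = g → ∞`, to the secrecy
array-gain constant of Eq. (21). -/
theorem stmt16 (κB yE κE : ℝ) (μB mB NB μE mE NE NA : ℕ) (τ : ℝ)
    (hκB : 0 < κB) (hyE : 0 < yE) (hκE : 0 < κE)
    (hμB : 1 ≤ μB) (hmB : 1 ≤ mB) (hμE : 1 ≤ μE) (hmE : 1 ≤ mE)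
    (hNB : 1 ≤ NB) (hNE : 1 ≤ NE) (hNA : 1 ≤ NA) (hτ : 1 ≤ τ) :
    Filter.Tendsto
      (fun g : ℝ => g ^ (NA * NB * μB) *
        ∫ γ in Set.Ioi (0 : ℝ),
          (∫ t in (0 : ℝ)..(τ * γ), kmuPDF (NB * g) κB (NB * μB) (NB * mB) t) ^ NA *
            kmuPDF (NE * yE) κE (NE * μE) (NE * mE) γ)
      Filter.atTop
      (nhds
        (((τ ^ (NB * μB) * (mB : ℝ) ^ (NB * mB) * (1 + κB) ^ (NB * μB) *
              (μB : ℝ) ^ (NB * μB - 1)) /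
            ((NB : ℝ) * ((mB : ℝ) + κB * μB) ^ (NB * mB) *
              (Nat.factorial (NB * μB - 1) : ℝ))) ^ NA *
          (yE / ((μE : ℝ) * (1 + κE))) ^ (NA * NB * μB) *
          ((mE : ℝ) ^ (NE * mE) *
              (Nat.factorial (NA * NB * μB + NE * μE - 1) : ℝ) /
            ((Nat.factorial (NE * μE - 1) : ℝ) *
              ((μE : ℝ) * κE + mE) ^ (NE * mE))) *
          twoF1 ((NE : ℝ) * mE) ((NA : ℝ) * NB * μB + (NE : ℝ) * μE) ((NE : ℝ) * μE)
            (κE * μE / ((mE : ℝ) + κE * μE)))) := by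
  have hτ0 : 0 < τ := by linarith
  have hNB0 : (0 : ℝ) < NB := by exact_mod_cast hNB
  have hNE0 : (0 : ℝ) < NE := by exact_mod_cast hNE
  have hμB0 : (0 : ℝ) < μB := by exact_mod_cast hμB
  have hμE0 : (0 : ℝ) < μE := by exact_mod_cast hμE
  have hmB0 : (0 : ℝ) < mB := by exact_mod_cast hmB
  have hmE0 : (0 : ℝ) < mE := by exact_mod_cast hmE
  have key := agg κB yE κE τ NB NE (NB * μB) (NB * mB) (NE * μE) (NE * mE) NA hκB hκE
    (Nat.mul_pos hNB hμB) (Nat.mul_pos hNB hmB) (Nat.mul_pos hNE hμE) (Nat.mul_pos hNE hmE)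
    hτ0 hNB0 hNE0 hyE
  rw [← mul_assoc NA NB μB] at key
  convert key using 2
  have e1 : twoF1 ((NE * mE : ℕ) : ℝ) ((NA * NB * μB + NE * μE : ℕ) : ℝ) ((NE * μE : ℕ) : ℝ)
      (((NE * μE : ℕ) : ℝ) * κE / (((NE * μE : ℕ) : ℝ) * κE + ((NE * mE : ℕ) : ℝ))) =
      twoF1 ((NE : ℝ) * mE) ((NA : ℝ) * NB * μB + (NE : ℝ) * μE) ((NE : ℝ) * μE)
            (κE * μE / ((mE : ℝ) + κE * μE)) := by
    push_cast
    congr 1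
    field_simp
    ring
  rw [e1]
  generalize twoF1 ((NE : ℝ) * mE) ((NA : ℝ) * NB * μB + (NE : ℝ) * μE) ((NE : ℝ) * μE)
            (κE * μE / ((mE : ℝ) + κE * μE)) = T
  have hB : (τ ^ (NB * μB) * (mB : ℝ) ^ (NB * mB) * (1 + κB) ^ (NB * μB) *
              (μB : ℝ) ^ (NB * μB - 1)) /
            ((NB : ℝ) * ((mB : ℝ) + κB * μB) ^ (NB * mB) *
              (Nat.factorial (NB * μB - 1) : ℝ)) =
      (((NB * μB : ℕ) : ℝ) ^ (NB * μB) * ((NB * mB : ℕ) : ℝ) ^ (NB * mB) * (1 + κB) ^ (NB * μB) /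
      ((NB * μB - 1).factorial * (((NB * μB : ℕ) : ℝ) * κB + ((NB * mB : ℕ) : ℝ)) ^ (NB * mB)))
        / (NB : ℝ) ^ (NB * μB) * (τ ^ (NB * μB) / ((NB * μB : ℕ) : ℝ)) := by
    have e2 : ((NB * μB : ℕ) : ℝ) * κB + ((NB * mB : ℕ) : ℝ) = NB * ((mB : ℝ) + κB * μB) := by
      push_cast; ring
    have e3 : (μB : ℝ) ^ (NB * μB) = μB ^ (NB * μB - 1) * μB := by
      rw [← pow_succ, Nat.sub_add_cancel (Nat.mul_pos hNB hμB)]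
    rw [e2]
    push_cast
    rw [mul_pow (NB : ℝ) (μB : ℝ), mul_pow (NB : ℝ) (mB : ℝ), mul_pow (NB : ℝ), e3]
    field_simp
  have hE : (yE / ((μE : ℝ) * (1 + κE))) ^ (NA * NB * μB) *
          ((mE : ℝ) ^ (NE * mE) *
              (Nat.factorial (NA * NB * μB + NE * μE - 1) : ℝ) /
            ((Nat.factorial (NE * μE - 1) : ℝ) *
              ((μE : ℝ) * κE + mE) ^ (NE * mE))) =
      ((NE * μE : ℕ) : ℝ) ^ (NE * μE) * ((NE * mE : ℕ) : ℝ) ^ (NE * mE) * (1 + κE) ^ (NE * μE) /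
      ((NE * μE - 1).factorial * (((NE * μE : ℕ) : ℝ) * κE + ((NE * mE : ℕ) : ℝ)) ^ (NE * mE))
        / ((NE : ℝ) * yE) ^ (NE * μE) * ((NA * NB * μB + NE * μE - 1).factorial /
        (((NE * μE : ℕ) : ℝ) * (1 + κE) / (NE * yE)) ^ (NA * NB * μB + NE * μE)) := by
    have e2 : ((NE * μE : ℕ) : ℝ) * κE + ((NE * mE : ℕ) : ℝ) = NE * ((μE : ℝ) * κE + mE) := by
      push_cast; ring
    have e3 : ((NE * μE : ℕ) : ℝ) * (1 + κE) / (NE * yE) = μE * (1 + κE) / yE := by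
      push_cast; field_simp
    rw [e2, e3]
    push_cast
    rw [mul_pow (NE : ℝ) (μE : ℝ), mul_pow (NE : ℝ) (mE : ℝ), mul_pow (NE : ℝ), mul_pow (NE : ℝ),
      pow_add, div_pow, div_pow, div_pow, mul_pow (μE : ℝ), mul_pow (μE : ℝ)]
    field_simp
  rw [hB, mul_assoc (_ ^ NA), hE, mul_pow]
  ring
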